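/- arXiv:2406.18137 — 2 statements merged into one kernel-verified Lean document; each statement's English description precedes it below -/
import Mathlib

section
/- Let B_{1,r}^P = {θ ∈ ℝ^P : ‖θ‖₁ ≤ r} be the ℓ₁-ball of radius r in ℝ^P with P ≥ 2. Then for every δ > 0, the covering number of B_{1,r}^P with respect to the Euclidean norm satisfies δ · √(log N(δ, B_{1,r}^P, ‖·‖₂)) ≤ 2 r √(2 log P). -/
open Finset

/-- δ-covering number of `Q` with respect to the metric `ρ`: the minimum cardinality of a
subset `C ⊆ Q` such that every `v ∈ Q` is within distance `δ` of some `v' ∈ C`. -/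
noncomputable def coveringNumber {γ : Type*} (δ : ℝ) (Q : Set γ) (ρ : γ → γ → ℝ) : ℕ∞ :=
  sInf {m : ℕ∞ | ∃ C : Set γ, C ⊆ Q ∧ C.encard = m ∧ ∀ v ∈ Q, ∃ v' ∈ C, ρ v v' ≤ δ}

/-!
The argument is Maurey's empirical method, derandomised. Let `c` lie in the convex hull of finitely
many points `v i` at distance at most `r` from `c`. For `x` in the hull, keep the error sum
`S = (c - x) + ∑ (v (f i) - x)` and choose the next point greedily: a linear functional on the hull
is minimised at one of the `v i`, so some `v i` gives a nonpositive cross term and `‖S‖²` grows by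
at most `r²`. After `k` choices the mean of `c` and the chosen points is within `r / √(k + 1)` of
`x`, so with `k = ⌊(r / δ)²⌋` the means, of which there are at most `(card ι) ^ k`, form a
`δ`-cover. The ℓ¹-ball is the hull of the `2P` points `± r eⱼ`, all at distance `r` from
`c = 0`, and `log (2P) ≤ 2 log P`.
-/

section CoveringNumber

variable {γ γ' : Type*} {δ : ℝ}

theorem coveringNumber_le_encard {Q C : Set γ} {ρ : γ → γ → ℝ}
    (hCQ : C ⊆ Q) (hC : ∀ v ∈ Q, ∃ v' ∈ C, ρ v v' ≤ δ) :
    coveringNumber δ Q ρ ≤ C.encard :=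
  sInf_le ⟨C, hCQ, rfl, hC⟩

theorem coveringNumber_image (f : γ → γ') (Q : Set γ) (ρ : γ' → γ' → ℝ) :
    coveringNumber δ (f '' Q) ρ = coveringNumber δ Q fun u v => ρ (f u) (f v) := by
  refine le_antisymm (le_sInf ?_) (le_sInf ?_)
  · rintro _ ⟨C, hCQ, rfl, hC⟩
    refine (coveringNumber_le_encard (Set.image_mono hCQ) ?_).trans (Set.encard_image_le f C)
    simpa only [Set.forall_mem_image, Set.exists_mem_image] using hC
  · rintro _ ⟨C, hCQ, rfl, hC⟩
    obtain ⟨D, hDQ, hD⟩ := Set.SurjOn.exists_bijOn_subset hCQ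
    rw [← hD.image_eq, hD.injOn.encard_image]
    refine coveringNumber_le_encard hDQ ?_
    simpa only [← hD.image_eq, Set.forall_mem_image, Set.exists_mem_image] using hC

end CoveringNumber

theorem log_toNat_le_log_natCast {N : ℕ∞} {n : ℕ} (h : N ≤ n) :
    Real.log N.toNat ≤ Real.log n := by
  obtain hN | hN := Nat.eq_zero_or_pos N.toNat
  · simpa [hN] using Real.log_natCast_nonneg n
  · exact Real.log_le_log (mod_cast hN) (mod_cast ENat.toNat_le_of_le_natCast h)

section AnchoredMean

variable {ι E : Type*} [AddCommGroup E] [Module ℝ E]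

/-- The mean of the anchor `c` and the points `v (f i)`: Maurey's empirical approximation, with `c`
counted as an extra sample so that it is meaningful for `k = 0`. -/
noncomputable def anchoredMean (c : E) (v : ι → E) {k : ℕ} (f : Fin k → ι) : E :=
  (k + 1 : ℝ)⁻¹ • (c + ∑ i, v (f i))

theorem anchoredMean_mem {s : Set E} (hs : Convex ℝ s) {c : E} (hc : c ∈ s)
    {v : ι → E} (hv : ∀ i, v i ∈ s) {k : ℕ} (f : Fin k → ι) : anchoredMean c v f ∈ s := by
  have hmem : ∑ i : Fin (k + 1), (k + 1 : ℝ)⁻¹ • (Fin.cons c (v ∘ f) : Fin (k + 1) → E) i ∈ s := by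
    refine hs.sum_mem (fun _ _ => by positivity) ?_ fun i _ => ?_
    · simp [mul_inv_cancel₀ (Nat.cast_add_one_ne_zero (R := ℝ) k)]
    · cases i using Fin.cases with
      | zero => exact hc
      | succ i => exact hv (f i)
  simpa [anchoredMean, Fin.sum_univ_succ, smul_sum, smul_add] using hmem

theorem anchoredMean_sub (c : E) (v : ι → E) {k : ℕ} (f : Fin k → ι) (x : E) :
    anchoredMean c v f - x = (k + 1 : ℝ)⁻¹ • ((c - x) + ∑ i, (v (f i) - x)) := by
  rw [anchoredMean, eq_inv_smul_iff₀ (Nat.cast_add_one_ne_zero k), smul_sub,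
    smul_inv_smul₀ (Nat.cast_add_one_ne_zero k), sum_sub_distrib, sum_const, card_univ,
    Fintype.card_fin, add_smul, one_smul, Nat.cast_smul_eq_nsmul]
  abel

end AnchoredMean

section Maurey

variable {ι E : Type*} [SeminormedAddCommGroup E] [InnerProductSpace ℝ E]
  {v : ι → E} {c x : E} {r δ : ℝ}

theorem exists_inner_sub_nonpos_of_mem_convexHull (hx : x ∈ convexHull ℝ (Set.range v)) (w : E) :
    ∃ i, inner ℝ w (v i - x) ≤ 0 := by
  obtain ⟨_, ⟨i, rfl⟩, hi⟩ :=
    ((innerₗ E w).concaveOn convex_univ).exists_le_of_mem_convexHull (Set.subset_univ _) hx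
  exact ⟨i, by simpa [inner_sub_right] using hi⟩

theorem exists_norm_add_sum_sub_sq_le (hv : ∀ i, dist (v i) c ≤ r)
    (hx : x ∈ convexHull ℝ (Set.range v)) (k : ℕ) :
    ∃ f : Fin k → ι, ‖(c - x) + ∑ i, (v (f i) - x)‖ ^ 2 ≤ (k + 1) * r ^ 2 := by
  induction k with
  | zero =>
    obtain ⟨_, ⟨i, rfl⟩, hi⟩ := convexHull_exists_dist_ge hx c
    have hcx : ‖c - x‖ ≤ r := by
      rw [← dist_eq_norm, dist_comm]
      exact hi.trans (hv i)
    exact ⟨Fin.elim0, by simpa using pow_le_pow_left₀ (norm_nonneg _) hcx 2⟩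
  | succ k ih =>
    obtain ⟨f, hf⟩ := ih
    set S := (c - x) + ∑ i, (v (f i) - x) with hS
    -- Adding `c - x` to `S` in the functional trades `‖v i - x‖ ^ 2` for `‖v i - c‖ ^ 2 ≤ r ^ 2`.
    obtain ⟨i, hi⟩ := exists_inner_sub_nonpos_of_mem_convexHull hx (S + (c - x))
    have hvc : ‖(v i - x) - (c - x)‖ ^ 2 ≤ r ^ 2 := by
      rw [sub_sub_sub_cancel_right, ← dist_eq_norm]
      exact pow_le_pow_left₀ dist_nonneg (hv i) 2
    refine ⟨Fin.cons i f, ?_⟩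
    calc ‖(c - x) + ∑ j, (v ((Fin.cons i f : Fin (k + 1) → ι) j) - x)‖ ^ 2
        = ‖S + (v i - x)‖ ^ 2 := by
          simp only [Fin.sum_univ_succ, Fin.cons_zero, Fin.cons_succ]
          rw [hS, add_left_comm, add_comm]
      _ = ‖S‖ ^ 2 + ‖(v i - x) - (c - x)‖ ^ 2 - ‖c - x‖ ^ 2
            + 2 * inner ℝ (S + (c - x)) (v i - x) := by
          rw [norm_add_sq_real, norm_sub_sq_real (v i - x), inner_add_left S,
            real_inner_comm (v i - x) (c - x)]
          ring
      _ ≤ ((k + 1 : ℕ) + 1) * r ^ 2 := by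
          push_cast
          linarith [sq_nonneg ‖c - x‖]

theorem exists_dist_anchoredMean_sq_le (hv : ∀ i, dist (v i) c ≤ r)
    (hx : x ∈ convexHull ℝ (Set.range v)) (k : ℕ) :
    ∃ f : Fin k → ι, dist x (anchoredMean c v f) ^ 2 ≤ r ^ 2 / (k + 1) := by
  obtain ⟨f, hf⟩ := exists_norm_add_sum_sub_sq_le hv hx k
  refine ⟨f, ?_⟩
  rw [dist_comm, dist_eq_norm, anchoredMean_sub, norm_smul, mul_pow, norm_inv, inv_pow,
    Real.norm_of_nonneg (by positivity), inv_mul_le_iff₀ (by positivity)]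
  exact hf.trans_eq (by field_simp)

variable [Fintype ι]

theorem coveringNumber_convexHull_range_le_pow (hc : c ∈ convexHull ℝ (Set.range v))
    (hv : ∀ i, dist (v i) c ≤ r) (hδ : 0 < δ) :
    coveringNumber δ (convexHull ℝ (Set.range v)) dist
      ≤ (Fintype.card ι ^ ⌊(r / δ) ^ 2⌋₊ : ℕ) := by
  set k := ⌊(r / δ) ^ 2⌋₊
  have hk : r ^ 2 / (k + 1) ≤ δ ^ 2 := by
    rw [div_le_comm₀ (by positivity) (by positivity), ← div_pow]
    exact (Nat.lt_floor_add_one _).le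
  refine (coveringNumber_le_encard (C := Set.range (anchoredMean c v (k := k))) ?_ ?_).trans ?_
  · rintro _ ⟨f, rfl⟩
    exact anchoredMean_mem (convex_convexHull ℝ _) hc
      (fun i => subset_convexHull ℝ _ (Set.mem_range_self i)) f
  · intro x hx
    obtain ⟨f, hf⟩ := exists_dist_anchoredMean_sq_le hv hx k
    exact ⟨_, ⟨f, rfl⟩, (pow_le_pow_iff_left₀ dist_nonneg hδ.le two_ne_zero).mp (hf.trans hk)⟩
  · rw [← Set.image_univ]
    refine (Set.encard_image_le _ _).trans_eq ?_
    simp [Set.encard_univ]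

theorem mul_sqrt_log_coveringNumber_convexHull_range_le (hc : c ∈ convexHull ℝ (Set.range v))
    (hv : ∀ i, dist (v i) c ≤ r) (hδ : 0 < δ) :
    δ * √(Real.log (coveringNumber δ (convexHull ℝ (Set.range v)) dist).toNat) ≤
      r * √(Real.log (Fintype.card ι)) := by
  obtain ⟨i⟩ : Nonempty ι := Set.range_nonempty_iff_nonempty.mp (convexHull_nonempty_iff.mp ⟨c, hc⟩)
  have hr : 0 ≤ r := dist_nonneg.trans (hv i)
  calc δ * √(Real.log (coveringNumber δ (convexHull ℝ (Set.range v)) dist).toNat)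
      ≤ δ * √((r / δ) ^ 2 * Real.log (Fintype.card ι)) := by
        gcongr
        refine (log_toNat_le_log_natCast (coveringNumber_convexHull_range_le_pow hc hv hδ)).trans ?_
        rw [Nat.cast_pow, Real.log_pow]
        gcongr
        exact Nat.floor_le (by positivity)
    _ = r * √(Real.log (Fintype.card ι)) := by
        rw [Real.sqrt_mul (sq_nonneg _), Real.sqrt_sq (by positivity), ← mul_assoc,
          mul_div_cancel₀ _ hδ.ne']

end Maurey

section CrossPolytope

theorem sum_smul_mem_of_absConvex {ι E : Type*} [Fintype ι] [AddCommGroup E] [Module ℝ E]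
    {s : Set E} (hs : AbsConvex ℝ s) (hne : s.Nonempty) {a : ι → ℝ} (ha : ∑ i, |a i| ≤ 1)
    {z : ι → E} (hz : ∀ i, z i ∈ s) : ∑ i, a i • z i ∈ s := by
  have hmem : ∑ o : Option ι, (o.elim (1 - ∑ i, |a i|) fun i => |a i|) •
      (o.elim 0 fun i => (SignType.sign (a i) : ℝ) • z i) ∈ s := by
    refine hs.2.sum_mem ?_ ?_ ?_
    · rintro (_ | i) _
      · exact sub_nonneg.mpr ha
      · exact abs_nonneg _
    · simp [Fintype.sum_option]
    · rintro (_ | i) _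
      · exact hs.1.zero_mem hne
      · refine hs.1.smul_mem ?_ (hz i)
        rcases SignType.trichotomy (SignType.sign (a i)) with h | h | h <;> simp [h]
  simpa [Fintype.sum_option, smul_smul, abs_mul_sign] using hmem

variable {ι : Type*} [Fintype ι]

theorem absConvex_setOf_sum_abs_le (r : ℝ) :
    AbsConvex ℝ {θ : EuclideanSpace ℝ ι | ∑ j, |θ j| ≤ r} := by
  let p : Seminorm ℝ (EuclideanSpace ℝ ι) := (normSeminorm ℝ (PiLp 1 fun _ : ι => ℝ)).comp
    ((WithLp.linearEquiv 2 ℝ (ι → ℝ)).trans (WithLp.linearEquiv 1 ℝ (ι → ℝ)).symm).toLinearMap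
  have hp : {θ : EuclideanSpace ℝ ι | ∑ j, |θ j| ≤ r} = p.closedBall 0 r := by
    ext θ
    simp [p, PiLp.norm_eq_of_L1]
  rw [hp]
  exact ⟨p.balanced_closedBall_zero r, p.convex_closedBall 0 r⟩

theorem setOf_sum_abs_le_eq_absConvexHull [DecidableEq ι] [Nonempty ι] {r : ℝ} (hr : 0 ≤ r) :
    {θ : EuclideanSpace ℝ ι | ∑ j, |θ j| ≤ r} =
      absConvexHull ℝ (Set.range fun i => EuclideanSpace.single i r) := by
  refine Set.Subset.antisymm (fun θ hθ => ?_)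
    (absConvexHull_min ?_ (absConvex_setOf_sum_abs_le r))
  · have hsum : ∑ i, (θ i / r) • EuclideanSpace.single i r = θ := by
      ext j
      have hj : r = 0 → θ j = 0 := fun h =>
        abs_nonpos_iff.mp ((single_le_sum (fun i _ => abs_nonneg (θ i)) (mem_univ j)).trans
          (h ▸ hθ))
      simp [Pi.single_apply, div_mul_cancel_of_imp hj]
    rw [← hsum]
    refine sum_smul_mem_of_absConvex absConvex_absConvexHull
      (absConvexHull_nonempty.mpr (Set.range_nonempty _)) ?_
      fun i => subset_absConvexHull (Set.mem_range_self i)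
    simp only [abs_div, ← sum_div, abs_of_nonneg hr]
    exact div_le_one_of_le₀ hθ hr
  · rintro _ ⟨i, rfl⟩
    simp [apply_ite, abs_of_nonneg hr]

/-- The vertices `± r eᵢ` of the ℓ¹-ball of radius `r`, the finite family to which Maurey's method
is applied; the left summand of the index type carries the sign `+`. -/
noncomputable def crossPolytopeVertex [DecidableEq ι] (r : ℝ) : ι ⊕ ι → EuclideanSpace ℝ ι :=
  Sum.elim (fun i => EuclideanSpace.single i r) fun i => -EuclideanSpace.single i r

theorem norm_crossPolytopeVertex [DecidableEq ι] (r : ℝ) (i : ι ⊕ ι) :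
    ‖crossPolytopeVertex r i‖ = |r| := by
  cases i <;> simp [crossPolytopeVertex]

theorem convexHull_range_crossPolytopeVertex [DecidableEq ι] [Nonempty ι] {r : ℝ} (hr : 0 ≤ r) :
    convexHull ℝ (Set.range (crossPolytopeVertex r)) =
      {θ : EuclideanSpace ℝ ι | ∑ j, |θ j| ≤ r} := by
  rw [setOf_sum_abs_le_eq_absConvexHull hr, ← convexHull_union_neg_eq_absConvexHull,
    crossPolytopeVertex, Set.Sum.elim_range, ← Set.image_neg_eq_neg, ← Set.range_comp]
  rfl

theorem coveringNumber_setOf_sum_abs_le (δ r : ℝ) :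
    coveringNumber δ {θ : ι → ℝ | ∑ j, |θ j| ≤ r} (fun u v => √(∑ j, (u j - v j) ^ 2)) =
      coveringNumber δ {θ : EuclideanSpace ℝ ι | ∑ j, |θ j| ≤ r} dist := by
  have himage : {θ : ι → ℝ | ∑ j, |θ j| ≤ r} =
      WithLp.ofLp '' {θ : EuclideanSpace ℝ ι | ∑ j, |θ j| ≤ r} :=
    ((WithLp.equiv 2 (ι → ℝ)).image_eq_preimage_symm
      {θ : EuclideanSpace ℝ ι | ∑ j, |θ j| ≤ r}).symm
  rw [himage, coveringNumber_image]
  congr! 3 with u v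
  simp only [EuclideanSpace.dist_eq, Real.dist_eq, sq_abs]

theorem l1_ball_covering_number_bound_general [Nonempty ι] {r δ : ℝ} (hr : 0 ≤ r) (hδ : 0 < δ) :
    coveringNumber δ {θ : ι → ℝ | ∑ j, |θ j| ≤ r} (fun u v => √(∑ j, (u j - v j) ^ 2)) ≠ ⊤ ∧
    δ * √(Real.log (coveringNumber δ {θ : ι → ℝ | ∑ j, |θ j| ≤ r}
        (fun u v => √(∑ j, (u j - v j) ^ 2))).toNat) ≤
      r * √(Real.log (2 * Fintype.card ι)) := by
  classical
  have hzero : (0 : EuclideanSpace ℝ ι) ∈ convexHull ℝ (Set.range (crossPolytopeVertex r)) := by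
    simpa [convexHull_range_crossPolytopeVertex hr] using hr
  have hdist (i : ι ⊕ ι) : dist (crossPolytopeVertex r i) 0 ≤ r := by
    rw [dist_zero_right, norm_crossPolytopeVertex, abs_of_nonneg hr]
  rw [coveringNumber_setOf_sum_abs_le, ← convexHull_range_crossPolytopeVertex hr]
  refine ⟨ne_top_of_le_ne_top (ENat.natCast_ne_top _)
    (coveringNumber_convexHull_range_le_pow hzero hdist hδ), ?_⟩
  simpa [← two_mul] using mul_sqrt_log_coveringNumber_convexHull_range_le hzero hdist hδ

end CrossPolytope

/-- Sudakov bound for the ℓ¹-ball: for the ℓ¹-ball of radius `r` in `ℝ^P`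
with `P ≥ 2`, the Euclidean covering number is finite and satisfies
`δ √(log N(δ, B¹_r, ‖·‖₂)) ≤ 2 r √(2 log P)` for every `δ > 0`. -/
theorem l1_ball_covering_number_bound
    (P : ℕ) (hP : 2 ≤ P) (r : ℝ) (hr : 0 < r) (δ : ℝ) (hδ : 0 < δ) :
    coveringNumber δ {θ : Fin P → ℝ | ∑ j, |θ j| ≤ r}
        (fun u v => Real.sqrt (∑ j, (u j - v j) ^ 2)) ≠ ⊤ ∧
    δ * Real.sqrt (Real.log
        ((coveringNumber δ {θ : Fin P → ℝ | ∑ j, |θ j| ≤ r}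
          (fun u v => Real.sqrt (∑ j, (u j - v j) ^ 2))).toNat)) ≤
      2 * r * Real.sqrt (2 * Real.log P) := by
  have : NeZero P := ⟨by lia⟩
  obtain ⟨hfinite, hbound⟩ := l1_ball_covering_number_bound_general (ι := Fin P) hr.le hδ
  rw [Fintype.card_fin] at hbound
  have hlog : Real.log (2 * P) ≤ 2 * Real.log P := by
    rw [Real.log_mul two_ne_zero (NeZero.ne _), two_mul (Real.log P)]
    gcongr
    exact_mod_cast hP
  refine ⟨hfinite, hbound.trans ?_⟩
  gcongr
  linarith
end

section
/- Let f_Θ(x) = θ_L σ(θ_{L−1} ⋯ σ(θ₁ x)⋯) be an L-layer network with softplus activation σ(t) = log(1 + e^t) − log 2, and parameters satisfying ‖Θ‖₁ = ∑_{l=1}^L ‖θ_l‖_{1,1} ≤ r. Then for every input x, the ℓ₁-norm of the gradient of f_Θ with respect to the input satisfies ‖∇_x f_Θ(x)‖₁ ≤ (r/L)^L. -/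
open MeasureTheory Finset ProbabilityTheory

/-- Entrywise ℓ¹ ("(1,1)") norm of a weight matrix. -/
noncomputable def matL11 {m k : ℕ} (A : Fin m → Fin k → ℝ) : ℝ :=
  ∑ i, ∑ j, |A i j|

/-- Hidden-layer activations: `hiddenLayer σ dims θ x l = h_l`, with `h_0 = x` and
`h_{l+1} = σ(θ_{l+1} h_l)` (entrywise activation). -/
noncomputable def hiddenLayer (σ : ℝ → ℝ) (dims : ℕ → ℕ)
    (θ : ∀ l, Fin (dims (l + 1)) → Fin (dims l) → ℝ)
    (x : Fin (dims 0) → ℝ) : (l : ℕ) → Fin (dims l) → ℝ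
  | 0 => x
  | l + 1 => fun i => σ (∑ j, θ l i j * hiddenLayer σ dims θ x l j)

/-- Scalar output of the `L`-layer network `f_Θ(x) = θ_L σ(θ_{L-1} ⋯ σ(θ_1 x) ⋯)`
(summed over the single output coordinate, since `dims L = 1`). -/
noncomputable def netOutput (σ : ℝ → ℝ) (L : ℕ) (dims : ℕ → ℕ)
    (θ : ∀ l, Fin (dims (l + 1)) → Fin (dims l) → ℝ)
    (x : Fin (dims 0) → ℝ) : ℝ :=
  ∑ i, ∑ j, θ (L - 1) i j * hiddenLayer σ dims θ x (L - 1) j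

/-- ℓ¹-norm of the whole parameter set: `‖Θ‖₁ = ∑_{l=1}^L ‖θ_l‖_{1,1}`. -/
noncomputable def paramsL1 (L : ℕ) (dims : ℕ → ℕ)
    (θ : ∀ l, Fin (dims (l + 1)) → Fin (dims l) → ℝ) : ℝ :=
  ∑ l ∈ Finset.range L, matL11 (θ l)

/-- The sparse hypothesis class `F_r = {f_Θ : ‖Θ‖₁ ≤ r}`. -/
def sparseClass (σ : ℝ → ℝ) (L : ℕ) (dims : ℕ → ℕ) (r : ℝ) :
    Set ((Fin (dims 0) → ℝ) → ℝ) :=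
  {f | ∃ θ : ∀ l, Fin (dims (l + 1)) → Fin (dims l) → ℝ,
        paramsL1 L dims θ ≤ r ∧ f = netOutput σ L dims θ}

/-- Gradient of `f` with respect to the input: `(∇_x f)_i = ∂f/∂x^i`. -/
noncomputable def gradIn {d : ℕ} (f : (Fin d → ℝ) → ℝ) (x : Fin d → ℝ) : Fin d → ℝ :=
  fun i => fderiv ℝ f x (Pi.single i 1)

/-- Laplacian (divergence of the input gradient) of `f`. -/
noncomputable def lapIn {d : ℕ} (f : (Fin d → ℝ) → ℝ) (x : Fin d → ℝ) : ℝ :=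
  ∑ i, fderiv ℝ (fun y => gradIn f y i) x (Pi.single i 1)

/-- Shifted softplus activation `σ(t) = log(1+e^t) - log 2`. -/
noncomputable def softplus (t : ℝ) : ℝ := Real.log (1 + Real.exp t) - Real.log 2

/-!
Equip the input space with the sup norm. Its dual norm is the `ℓ¹` norm, so the `ℓ¹` norm of a
gradient is at most any Lipschitz constant of the function. A layer with weights `θ_l` is Lipschitz
in the sup norm with constant its largest absolute row sum, hence with constant `‖θ_l‖_{1,1}`, and
softplus is `1`-Lipschitz because its derivative is the sigmoid. The network is therefore Lipschitz
with constant `∏ l, ‖θ_l‖_{1,1}`, which AM-GM bounds by `(r / L) ^ L`.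
-/

open scoped NNReal

lemma sum_abs_apply_single_le_opNorm {ι : Type*} [Fintype ι] [DecidableEq ι]
    (f : (ι → ℝ) →L[ℝ] ℝ) : ∑ i, |f (Pi.single i 1)| ≤ ‖f‖ := by
  -- Test `f` on the sign vector of its own coefficients.
  let s : ι → ℝ := fun i => SignType.sign (f (Pi.single i 1))
  have hs : ‖s‖ ≤ 1 := (pi_norm_le_iff_of_nonneg zero_le_one).2 fun i => by
    rcases lt_trichotomy (f (Pi.single i 1)) 0 with h | h | h <;> simp [s, h]
  calc ∑ i, |f (Pi.single i 1)| = ∑ i, s i • f (Pi.single i 1) := by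
        simp only [s, smul_eq_mul, sign_mul_self]
    _ = f s := by simp only [← map_smul, ← map_sum, ← pi_eq_sum_univ' s]
    _ ≤ ‖f‖ := (le_abs_self _).trans (f.unit_le_opNorm s hs)

lemma prod_le_sum_div_card_pow {ι : Type*} (s : Finset ι) {a : ι → ℝ} (ha : ∀ i ∈ s, 0 ≤ a i) :
    ∏ i ∈ s, a i ≤ ((∑ i ∈ s, a i) / #s) ^ #s := by
  rcases s.eq_empty_or_nonempty with rfl | hs
  · simp
  have hprod : 0 ≤ ∏ i ∈ s, a i := prod_nonneg ha
  have amgm : (∏ i ∈ s, a i) ^ (#s : ℝ)⁻¹ ≤ (∑ i ∈ s, a i) / #s := by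
    simpa using Real.geom_mean_le_arith_mean s (fun _ => 1) a (fun _ _ => zero_le_one)
      (by simpa using hs) ha
  calc ∏ i ∈ s, a i = ((∏ i ∈ s, a i) ^ (#s : ℝ)⁻¹) ^ #s :=
        (Real.rpow_inv_natCast_pow hprod hs.card_ne_zero).symm
    _ ≤ ((∑ i ∈ s, a i) / #s) ^ #s := by gcongr

section Lipschitz

variable {ι α : Type*} [PseudoEMetricSpace α]

lemma lipschitzWith_sum {E : Type*} [SeminormedAddCommGroup E] (s : Finset ι) {K : ι → ℝ≥0}
    {f : ι → α → E} (hf : ∀ i ∈ s, LipschitzWith (K i) (f i)) :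
    LipschitzWith (∑ i ∈ s, K i) fun x => ∑ i ∈ s, f i x := by
  classical
  induction s using Finset.induction_on with
  | empty => simpa using LipschitzWith.const (0 : E)
  | insert i s hi ih =>
    simp only [sum_insert hi]
    exact (hf i (mem_insert_self i s)).add (ih fun j hj => hf j (mem_insert_of_mem hj))

lemma lipschitzWith_sum_mul {R : Type*} [SeminormedRing R] (s : Finset ι) (a : ι → R) {K : ℝ≥0}
    {f : ι → α → R} (hf : ∀ i ∈ s, LipschitzWith K (f i)) :
    LipschitzWith ((∑ i ∈ s, ‖a i‖₊) * K) fun x => ∑ i ∈ s, a i * f i x := by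
  rw [sum_mul]
  exact lipschitzWith_sum s fun i hi => (lipschitzWith_smul (a i)).comp (hf i hi)

end Lipschitz

lemma hasDerivAt_softplus (t : ℝ) : HasDerivAt softplus (Real.sigmoid t) t := by
  have hpos : 0 < 1 + Real.exp t := by positivity
  have hsigmoid : Real.sigmoid t = Real.exp t / (1 + Real.exp t) := by
    rw [Real.sigmoid_def, Real.exp_neg]
    field_simp
    ring
  rw [hsigmoid]
  exact (((Real.hasDerivAt_exp t).const_add 1).log hpos.ne').sub_const (Real.log 2)

lemma differentiable_softplus : Differentiable ℝ softplus :=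
  fun t => (hasDerivAt_softplus t).differentiableAt

lemma lipschitzWith_softplus : LipschitzWith 1 softplus :=
  lipschitzWith_of_nnnorm_deriv_le differentiable_softplus fun t => by
    rw [(hasDerivAt_softplus t).deriv, ← NNReal.coe_le_coe, coe_nnnorm,
      Real.norm_of_nonneg (Real.sigmoid_nonneg t)]
    exact Real.sigmoid_le_one t

lemma matL11_nonneg {m k : ℕ} (A : Fin m → Fin k → ℝ) : 0 ≤ matL11 A :=
  sum_nonneg fun _ _ => sum_nonneg fun _ _ => abs_nonneg _

lemma toNNReal_matL11 {m k : ℕ} (A : Fin m → Fin k → ℝ) :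
    (matL11 A).toNNReal = ∑ i, ∑ j, ‖A i j‖₊ := by
  ext
  rw [Real.coe_toNNReal _ (matL11_nonneg A)]
  simp [matL11]

lemma sum_nnnorm_row_le_toNNReal_matL11 {m k : ℕ} (A : Fin m → Fin k → ℝ) (i : Fin m) :
    ∑ j, ‖A i j‖₊ ≤ (matL11 A).toNNReal := by
  rw [toNNReal_matL11]
  exact single_le_sum_of_canonicallyOrdered (f := fun i => ∑ j, ‖A i j‖₊) (mem_univ i)

section Network

variable {σ : ℝ → ℝ} {K : ℝ≥0} {dims : ℕ → ℕ} (θ : ∀ l, Fin (dims (l + 1)) → Fin (dims l) → ℝ)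

lemma differentiable_hiddenLayer (hσ : Differentiable ℝ σ) (l : ℕ) (j : Fin (dims l)) :
    Differentiable ℝ fun x => hiddenLayer σ dims θ x l j := by
  induction l with
  | zero => exact differentiable_apply j
  | succ l ih => exact hσ.comp (Differentiable.fun_sum fun k _ => (ih k).const_mul (θ l j k))

lemma differentiable_netOutput (hσ : Differentiable ℝ σ) (L : ℕ) :
    Differentiable ℝ (netOutput σ L dims θ) :=
  Differentiable.fun_sum fun i _ => Differentiable.fun_sum fun j _ =>
    (differentiable_hiddenLayer θ hσ (L - 1) j).const_mul (θ (L - 1) i j)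

lemma lipschitzWith_hiddenLayer (hσ : LipschitzWith K σ) (l : ℕ) (j : Fin (dims l)) :
    LipschitzWith (K ^ l * ∏ k ∈ range l, (matL11 (θ k)).toNNReal)
      fun x => hiddenLayer σ dims θ x l j := by
  induction l with
  | zero => simpa [hiddenLayer] using LipschitzWith.eval j
  | succ l ih =>
    refine (hσ.comp (lipschitzWith_sum_mul univ (θ l j) fun k _ => ih k)).weaken ?_
    calc K * ((∑ k, ‖θ l j k‖₊) * (K ^ l * ∏ k ∈ range l, (matL11 (θ k)).toNNReal))
        ≤ K * ((matL11 (θ l)).toNNReal * (K ^ l * ∏ k ∈ range l, (matL11 (θ k)).toNNReal)) := by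
          gcongr
          exact sum_nnnorm_row_le_toNNReal_matL11 (θ l) j
      _ = K ^ (l + 1) * ∏ k ∈ range (l + 1), (matL11 (θ k)).toNNReal := by
          rw [prod_range_succ]
          ring

lemma lipschitzWith_netOutput_succ (hσ : LipschitzWith K σ) (n : ℕ) :
    LipschitzWith (K ^ n * ∏ k ∈ range (n + 1), (matL11 (θ k)).toNNReal)
      (netOutput σ (n + 1) dims θ) := by
  have hout := lipschitzWith_sum univ fun i _ =>
    lipschitzWith_sum_mul univ (θ n i) fun j _ => lipschitzWith_hiddenLayer θ hσ n j
  rwa [← sum_mul, ← toNNReal_matL11, mul_left_comm, mul_comm (matL11 _).toNNReal,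
    ← prod_range_succ] at hout

lemma prod_matL11_le_div_pow {L : ℕ} {r : ℝ} (hθ : paramsL1 L dims θ ≤ r) :
    ∏ k ∈ range L, matL11 (θ k) ≤ (r / L) ^ L := by
  have hnonneg : 0 ≤ paramsL1 L dims θ := sum_nonneg fun k _ => matL11_nonneg (θ k)
  calc ∏ k ∈ range L, matL11 (θ k) ≤ (paramsL1 L dims θ / L) ^ L := by
        simpa [paramsL1] using prod_le_sum_div_card_pow (range L) fun k _ => matL11_nonneg (θ k)
    _ ≤ (r / L) ^ L := by gcongr

end Network

theorem input_gradient_l1_bound_general {σ : ℝ → ℝ} {K : ℝ≥0} (hσ : LipschitzWith K σ)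
    {L : ℕ} (hL : 1 ≤ L) {dims : ℕ → ℕ} (θ : ∀ l, Fin (dims (l + 1)) → Fin (dims l) → ℝ)
    {r : ℝ} (hθ : paramsL1 L dims θ ≤ r) {x : Fin (dims 0) → ℝ}
    {f' : (Fin (dims 0) → ℝ) →L[ℝ] ℝ} (hf' : HasFDerivAt (netOutput σ L dims θ) f' x) :
    ∑ i, |f' (Pi.single i 1)| ≤ K ^ (L - 1) * (r / L) ^ L := by
  obtain ⟨n, rfl⟩ := Nat.exists_eq_add_of_le' hL
  calc ∑ i, |f' (Pi.single i 1)| ≤ ‖f'‖ := sum_abs_apply_single_le_opNorm f'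
    _ ≤ K ^ n * ∏ k ∈ range (n + 1), matL11 (θ k) := by
        simpa [Real.coe_toNNReal _ (matL11_nonneg _)] using
          hf'.le_of_lipschitz (lipschitzWith_netOutput_succ θ hσ n)
    _ ≤ K ^ n * (r / ↑(n + 1)) ^ (n + 1) := by
        gcongr
        exact prod_matL11_le_div_pow θ hθ

/-- bounded norm of partial derivatives: for an `L`-layer network with
shifted softplus activation and parameters of total ℓ¹-norm at most `r`, the ℓ¹-norm of the
input gradient satisfies `‖∇_x f_Θ(x)‖₁ ≤ (r/L)^L` for every input `x`. -/
theorem input_gradient_l1_bound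
    (L : ℕ) (hL : 1 ≤ L) (dims : ℕ → ℕ) (hdL : dims L = 1)
    (r : ℝ)
    (θ : ∀ l, Fin (dims (l + 1)) → Fin (dims l) → ℝ)
    (hθ : paramsL1 L dims θ ≤ r)
    (x : Fin (dims 0) → ℝ) :
    ∑ i, |gradIn (netOutput softplus L dims θ) x i| ≤ (r / (L : ℝ)) ^ L := by
  simpa [gradIn] using input_gradient_l1_bound_general lipschitzWith_softplus hL θ hθ
    (differentiable_netOutput θ differentiable_softplus L x).hasFDerivAt
end
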